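/- Improved Random Walk Theorem: for 0 ≤ ℓ < n, the spectral gap of the multi-level down-up walk from level n to ℓ satisfies γ(P_{n,ℓ}^∇) ≥ (Σ_{i=ℓ}^{n-1} Γ_i)/(Σ_{i=0}^{n-1} Γ_i), where Γ_0 = 1 and Γ_i = ∏_{j=0}^{i-1}(2γ_j − 1), with γ_j the minimum local-walk spectral gap over faces of size j. -/

import Mathlib

open Finset
open scoped Classical

variable {E : Type*} [Fintype E] [DecidableEq E]

/-- `μ` is a probability distribution on the size-`n` faces (top level) of a pure
weighted simplicial complex with ground set `E`. -/
def IsDistOn (μ : Finset E → ℝ) (n : ℕ) : Prop :=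
  (∀ S, 0 ≤ μ S) ∧ (∀ S, S.card ≠ n → μ S = 0) ∧ (∑ S, μ S = 1)

/-- The induced distribution `π_k` on level `k`:
`π_k(S) = C(n,k)⁻¹ · Σ_{T ⊇ S} μ(T)` for `|S| = k`, and `0` otherwise. -/
noncomputable def piLev (μ : Finset E → ℝ) (n k : ℕ) (S : Finset E) : ℝ :=
  if S.card = k then (n.choose k : ℝ)⁻¹ * ∑ T ∈ univ.filter (fun T => S ⊆ T), μ T else 0

/-- The stationary distribution `π_{S,1}` of the local walk at the face `S`:
the one-element conditional distribution above `S`. -/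
noncomputable def piLoc (μ : Finset E → ℝ) (n : ℕ) (S : Finset E) (a : E) : ℝ :=
  piLev μ n (S.card + 1) (insert a S) / ((S.card + 1) * piLev μ n S.card S)

/-- The local walk `Q_S` at a face `S`:
`Q_S(a,b) = π_{i+2}(S∪a∪b) / ((i+2)·π_{i+1}(S∪a))` (0 when `a = b`). -/
noncomputable def localQ (μ : Finset E → ℝ) (n : ℕ) (S : Finset E) : Matrix E E ℝ :=
  Matrix.of fun a b =>
    piLev μ n (S.card + 2) (insert b (insert a S)) /
      ((S.card + 2) * piLev μ n (S.card + 1) (insert a S))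

/-- The down operator `P↓_k` from level `k` to level `k−1`. -/
noncomputable def Pdown (k : ℕ) : Matrix (Finset E) (Finset E) ℝ :=
  Matrix.of fun S T => if T ⊆ S ∧ S.card = k ∧ T.card = k - 1 then (k : ℝ)⁻¹ else 0

/-- The up operator `P↑_k` from level `k` to level `k+1`. -/
noncomputable def Pup (μ : Finset E → ℝ) (n k : ℕ) : Matrix (Finset E) (Finset E) ℝ :=
  Matrix.of fun S T => if S ⊆ T ∧ S.card = k ∧ T.card = k + 1 then
    piLev μ n (k + 1) T / (((k : ℝ) + 1) * piLev μ n k S) else 0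

/-- The multi-level down operator from level `i` to level `j ≤ i`
(remove `i−j` uniformly random elements). -/
noncomputable def PdownM (i j : ℕ) : Matrix (Finset E) (Finset E) ℝ :=
  Matrix.of fun S T => if T ⊆ S ∧ S.card = i ∧ T.card = j then (i.choose j : ℝ)⁻¹ else 0

/-- The multi-level up operator from level `j` to level `i ≥ j`
(add `i−j` elements according to the conditional distribution). -/
noncomputable def PupM (μ : Finset E → ℝ) (n j i : ℕ) : Matrix (Finset E) (Finset E) ℝ :=
  Matrix.of fun S T => if S ⊆ T ∧ S.card = j ∧ T.card = i then
    piLev μ n i T / ((i.choose j : ℝ) * piLev μ n j S) else 0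

/-- Dirichlet form `E_P(f) = (1/2)·Σ_{a,b} π(a)P(a,b)(f(a)−f(b))²`. -/
noncomputable def dirichletForm {ι : Type*} [Fintype ι] (π : ι → ℝ)
    (P : Matrix ι ι ℝ) (f : ι → ℝ) : ℝ :=
  (1 / 2) * ∑ a, ∑ b, π a * P a b * (f a - f b) ^ 2

/-- Variance `Var_π(f)` with respect to a weight `π` summing to 1. -/
noncomputable def varw {ι : Type*} [Fintype ι] (π : ι → ℝ) (f : ι → ℝ) : ℝ :=
  ∑ a, π a * (f a - ∑ b, π b * f b) ^ 2

/-!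
Let `D k` be the `π_k`-average over `S` of the variance, as one random element is added to `S`, of
the conditional mean of `f`. By the law of total variance, the Dirichlet form of the walk from level
`n` to level `l` is `∑_{k=l}^{n-1} D k` and the variance of `f` is `∑_{k=0}^{n-1} D k`. It therefore
suffices that `(2γ_k − 1) D k ≤ D (k + 1)`. With `z`, `x a`, `y a b` the conditional means above
`S`, `S ∪ {a}`, `S ∪ {a, b}`, this follows from the Poincaré inequality of the local walk `Q_S` by
expanding the nonnegative second moment of `y a b - x a - (x b - z)` over a stationary step `(a, b)`
of `Q_S`.
-/

section Increments

variable {K : Type*} [Field K] [LinearOrder K] [IsStrictOrderedRing K]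

theorem prod_range_mul_le_prod_range_mul {c d : ℕ → K} {n : ℕ} (hc : ∀ j, 0 ≤ c j)
    (hd : ∀ k, k + 1 < n → c k * d k ≤ d (k + 1)) {i j : ℕ} (hij : i ≤ j) (hj : j < n) :
    (∏ m ∈ range j, c m) * d i ≤ (∏ m ∈ range i, c m) * d j := by
  induction j, hij using Nat.le_induction with
  | base => rfl
  | succ j _ ih =>
    calc (∏ m ∈ range (j + 1), c m) * d i
        = c j * ((∏ m ∈ range j, c m) * d i) := by rw [prod_range_succ]; ring
      _ ≤ c j * ((∏ m ∈ range i, c m) * d j) := mul_le_mul_of_nonneg_left (ih (by lia)) (hc j)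
      _ = (∏ m ∈ range i, c m) * (c j * d j) := by ring
      _ ≤ (∏ m ∈ range i, c m) * d (j + 1) :=
        mul_le_mul_of_nonneg_left (hd j hj) (prod_nonneg fun m _ => hc m)

theorem sum_Ico_div_sum_range_mul_le {w d : ℕ → K} {l n : ℕ} (hl : l ≤ n)
    (hw : 0 < ∑ i ∈ range n, w i) (h : ∀ i j, i ≤ j → j < n → w j * d i ≤ w i * d j) :
    ((∑ i ∈ Ico l n, w i) / ∑ i ∈ range n, w i) * ∑ i ∈ range n, d i ≤ ∑ i ∈ Ico l n, d i := by
  have cross : (∑ j ∈ Ico l n, w j) * ∑ i ∈ range l, d i ≤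
      (∑ i ∈ range l, w i) * ∑ j ∈ Ico l n, d j := by
    rw [sum_mul_sum, sum_mul_sum, sum_comm]
    refine sum_le_sum fun i hi => sum_le_sum fun j hj => h i j ?_ (mem_Ico.1 hj).2
    exact (mem_range.1 hi).le.trans (mem_Ico.1 hj).1
  rw [div_mul_eq_mul_div, div_le_iff₀ hw, ← sum_range_add_sum_Ico w hl,
    ← sum_range_add_sum_Ico d hl]
  linear_combination cross

end Increments

section Variance

variable {ι : Type*} [Fintype ι]

theorem varw_eq_sum_sq_sub {p : ι → ℝ} (hp : ∑ a, p a = 1) (f : ι → ℝ) :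
    varw p f = ∑ a, p a * f a ^ 2 - (∑ a, p a * f a) ^ 2 := by
  set z := ∑ a, p a * f a with hz
  calc varw p f = ∑ a, (p a * f a ^ 2 - 2 * z * (p a * f a) + z ^ 2 * p a) :=
        sum_congr rfl fun a _ => by rw [← hz]; ring
    _ = ∑ a, p a * f a ^ 2 - z ^ 2 := by
        rw [sum_add_distrib, sum_sub_distrib, ← mul_sum, ← mul_sum, hp, ← hz]; ring

theorem sum_mul_varw {β : Type*} [Fintype β] {ν : β → ℝ} {κ : β → ι → ℝ}
    (hκ : ∀ b, ν b ≠ 0 → ∑ i, κ b i = 1) (F : β → ι → ℝ) :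
    ∑ b, ν b * varw (κ b) (F b) =
      ∑ b, ν b * ∑ i, κ b i * F b i ^ 2 - ∑ b, ν b * (∑ i, κ b i * F b i) ^ 2 := by
  rw [← sum_sub_distrib]
  refine sum_congr rfl fun b _ => ?_
  rcases eq_or_ne (ν b) 0 with h0 | h0
  · simp [h0]
  · rw [varw_eq_sum_sq_sub (hκ b h0)]; ring

theorem sum_sum_reversible_swap {p : ι → ℝ} {Q : Matrix ι ι ℝ}
    (hpQ : ∀ a b, p a * Q a b = p b * Q b a) (G : ι → ι → ℝ) :
    ∑ a, ∑ b, p a * Q a b * G a b = ∑ a, ∑ b, p a * Q a b * G b a := by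
  rw [sum_comm]
  simp_rw [fun a b => hpQ b a]

theorem dirichletForm_eq_sum_mul_sub {p : ι → ℝ} {Q : Matrix ι ι ℝ}
    (hpQ : ∀ a b, p a * Q a b = p b * Q b a) (f : ι → ℝ) :
    dirichletForm p Q f = ∑ a, ∑ b, p a * Q a b * (f a * (f a - f b)) := by
  calc dirichletForm p Q f
      = 1 / 2 * (∑ a, ∑ b, p a * Q a b * (f a * (f a - f b)) +
          ∑ a, ∑ b, p a * Q a b * (f b * (f b - f a))) := by
        simp_rw [dirichletForm, ← sum_add_distrib]
        refine congrArg _ (sum_congr rfl fun a _ => sum_congr rfl fun b _ => ?_)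
        ring
    _ = ∑ a, ∑ b, p a * Q a b * (f a * (f a - f b)) := by
        rw [sum_sum_reversible_swap hpQ fun a b => f b * (f b - f a)]; ring

theorem dirichletForm_const_row {p : ι → ℝ} (hp : ∑ a, p a = 1) (f : ι → ℝ) :
    dirichletForm p (Matrix.of fun _ => p) f = varw p f := by
  rw [dirichletForm_eq_sum_mul_sub (Q := Matrix.of fun _ => p) fun a b => mul_comm (p a) (p b),
    varw_eq_sum_sq_sub hp]
  simp_rw [Matrix.of_apply]
  calc ∑ a, ∑ b, p a * p b * (f a * (f a - f b))
      = ∑ a, (p a * f a ^ 2 * ∑ b, p b - p a * f a * ∑ b, p b * f b) := by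
        simp_rw [mul_sum, ← sum_sub_distrib]
        exact sum_congr rfl fun a _ => sum_congr rfl fun b _ => by ring
    _ = ∑ a, p a * f a ^ 2 - (∑ a, p a * f a) ^ 2 := by
        simp_rw [hp, mul_one]
        rw [sum_sub_distrib, ← sum_mul, sq]

theorem dirichletForm_mul_of_adjoint {β : Type*} [Fintype β] {π : ι → ℝ} {ν : β → ℝ}
    {D : Matrix ι β ℝ} {U : Matrix β ι ℝ} (hadj : ∀ a b, π a * D a b = ν b * U b a)
    (hU : ∀ b, ν b ≠ 0 → ∑ a, U b a = 1) (f : ι → ℝ) :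
    dirichletForm π (D * U) f = ∑ b, ν b * varw (U b) f := by
  have hmul (a a' : ι) : π a * (D * U) a a' = ∑ b, ν b * (U b a * U b a') := by
    rw [Matrix.mul_apply, mul_sum]
    exact sum_congr rfl fun b _ => by rw [← mul_assoc, hadj, mul_assoc]
  calc dirichletForm π (D * U) f
      = 1 / 2 * ∑ a, ∑ a', ∑ b, ν b * (U b a * U b a' * (f a - f a') ^ 2) := by
        simp_rw [dirichletForm, hmul, sum_mul, mul_assoc]
    _ = 1 / 2 * ∑ b, ∑ a, ∑ a', ν b * (U b a * U b a' * (f a - f a') ^ 2) := by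
        simp_rw [sum_comm (s := univ (α := ι)) (t := univ (α := β))]
    _ = ∑ b, ν b * dirichletForm (U b) (Matrix.of fun _ => U b) f := by
        simp_rw [dirichletForm, Matrix.of_apply, ← mul_sum, mul_left_comm (ν _), ← mul_sum]
    _ = ∑ b, ν b * varw (U b) f := by
        refine sum_congr rfl fun b _ => ?_
        rcases eq_or_ne (ν b) 0 with h0 | h0
        · simp [h0]
        · rw [dirichletForm_const_row (hU b h0)]

theorem sum_sum_mul_of_average {p x : ι → ℝ} {Q : Matrix ι ι ℝ} {y : ι → ι → ℝ}
    (hx : ∀ a, p a ≠ 0 → ∑ b, Q a b * y a b = x a) (g : ι → ℝ) :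
    ∑ a, ∑ b, p a * Q a b * (y a b * g a) = ∑ a, p a * (x a * g a) := by
  refine sum_congr rfl fun a _ => ?_
  rcases eq_or_ne (p a) 0 with h0 | h0
  · simp [h0]
  · rw [← hx a h0, sum_mul, mul_sum]
    exact sum_congr rfl fun b _ => by ring

theorem sum_sum_mul_of_row_sum {p : ι → ℝ} {Q : Matrix ι ι ℝ}
    (hQ : ∀ a, p a ≠ 0 → ∑ b, Q a b = 1) (g : ι → ℝ) :
    ∑ a, ∑ b, p a * Q a b * g a = ∑ a, p a * g a := by
  simpa using sum_sum_mul_of_average (x := 1) (y := 1) (fun a h0 => by simpa using hQ a h0) g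

theorem sum_sum_residual_mul_eq_dirichletForm {p x : ι → ℝ} {Q : Matrix ι ι ℝ}
    {y : ι → ι → ℝ} (hpQ : ∀ a b, p a * Q a b = p b * Q b a)
    (hQ : ∀ a, p a ≠ 0 → ∑ b, Q a b = 1) (hy : ∀ a b, y a b = y b a)
    (hx : ∀ a, p a ≠ 0 → ∑ b, Q a b * y a b = x a) (z : ℝ) :
    ∑ a, ∑ b, p a * Q a b * ((y a b - x a) * (x b - z)) = dirichletForm p Q x := by
  have average : ∑ a, ∑ b, p a * Q a b * (y a b * (x b - z)) =
      ∑ a, ∑ b, p a * Q a b * (x a * (x a - z)) := by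
    rw [sum_sum_reversible_swap hpQ, sum_sum_mul_of_row_sum hQ fun a => x a * (x a - z)]
    simp_rw [fun a b => hy b a]
    exact sum_sum_mul_of_average hx fun a => x a - z
  calc ∑ a, ∑ b, p a * Q a b * ((y a b - x a) * (x b - z))
      = ∑ a, ∑ b, p a * Q a b * (y a b * (x b - z)) -
          ∑ a, ∑ b, p a * Q a b * (x a * (x b - z)) := by
        simp_rw [sub_mul, mul_sub, sum_sub_distrib]
    _ = ∑ a, ∑ b, p a * Q a b * (x a * (x a - x b)) := by
        rw [average]
        simp_rw [← sum_sub_distrib]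
        exact sum_congr rfl fun a _ => sum_congr rfl fun b _ => by ring
    _ = dirichletForm p Q x := (dirichletForm_eq_sum_mul_sub hpQ x).symm

theorem two_mul_sub_one_mul_varw_le {p x : ι → ℝ} {Q : Matrix ι ι ℝ} {y : ι → ι → ℝ} {c : ℝ}
    (hnonneg : ∀ a b, 0 ≤ p a * Q a b) (hpQ : ∀ a b, p a * Q a b = p b * Q b a)
    (hQ : ∀ a, p a ≠ 0 → ∑ b, Q a b = 1) (hy : ∀ a b, y a b = y b a)
    (hx : ∀ a, p a ≠ 0 → ∑ b, Q a b * y a b = x a) (hc : c * varw p x ≤ dirichletForm p Q x) :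
    (2 * c - 1) * varw p x ≤ ∑ a, p a * varw (Q a) (y a) := by
  set z := ∑ a, p a * x a with hz
  have hvar : ∑ a, ∑ b, p a * Q a b * (x b - z) ^ 2 = varw p x := by
    rw [sum_sum_reversible_swap hpQ, sum_sum_mul_of_row_sum hQ fun a => (x a - z) ^ 2, varw, hz]
  have hresidual : ∑ a, ∑ b, p a * Q a b * (y a b - x a) ^ 2 = ∑ a, p a * varw (Q a) (y a) := by
    refine sum_congr rfl fun a _ => ?_
    rcases eq_or_ne (p a) 0 with h0 | h0
    · simp [h0]
    · simp_rw [varw, hx a h0, mul_sum, mul_assoc]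
  -- The cross term is a Dirichlet form because `x` averages the symmetric function `y`.
  have hexpand : ∑ a, ∑ b, p a * Q a b * (y a b - x a - (x b - z)) ^ 2 =
      ∑ a, p a * varw (Q a) (y a) - 2 * dirichletForm p Q x + varw p x := by
    rw [← hresidual, ← hvar, ← sum_sum_residual_mul_eq_dirichletForm hpQ hQ hy hx z]
    simp_rw [mul_sum, ← sum_sub_distrib, ← sum_add_distrib]
    exact sum_congr rfl fun a _ => sum_congr rfl fun b _ => by ring
  have : 0 ≤ ∑ a, ∑ b, p a * Q a b * (y a b - x a - (x b - z)) ^ 2 :=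
    sum_nonneg fun a _ => sum_nonneg fun b _ => mul_nonneg (hnonneg a b) (sq_nonneg _)
  linarith

end Variance

theorem sum_powersetCard_sum_sdiff_insert {α M : Type*} [DecidableEq α] [AddCommMonoid M]
    (s : Finset α) (k : ℕ) (H : Finset α → M) :
    ∑ S ∈ powersetCard k s, ∑ a ∈ s \ S, H (insert a S) =
      (k + 1) • ∑ T ∈ powersetCard (k + 1) s, H T := by
  have hcard : ∀ T ∈ powersetCard (k + 1) s, (k + 1) • H T = ∑ _a ∈ T, H T := fun T hT => by
    rw [sum_const, (mem_powersetCard.1 hT).2]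
  rw [smul_sum, sum_congr rfl hcard, sum_sigma', sum_sigma']
  refine sum_bij' (fun q _ => ⟨insert q.2 q.1, q.2⟩) (fun q _ => ⟨q.1.erase q.2, q.2⟩)
    (by grind) (by grind) ?_ ?_ fun _ _ => rfl
  · rintro ⟨S, a⟩ h
    simp [erase_insert (mem_sdiff.1 (mem_sigma.1 h).2).2]
  · rintro ⟨T, a⟩ h
    simp [insert_erase (mem_sigma.1 h).2]

theorem sum_compl_sum_insert_subset {g : Finset E → ℝ} {n : ℕ} (hg : ∀ T, T.card ≠ n → g T = 0)
    (S : Finset E) :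
    ∑ a ∈ Sᶜ, ∑ T with insert a S ⊆ T, g T = (n - S.card : ℝ) * ∑ T with S ⊆ T, g T := by
  calc ∑ a ∈ Sᶜ, ∑ T with insert a S ⊆ T, g T = ∑ T with S ⊆ T, ∑ _a ∈ T \ S, g T :=
        sum_comm' (by grind [mem_compl])
    _ = ∑ T with S ⊆ T, (n - S.card : ℝ) * g T := by
        refine sum_congr rfl fun T hT => ?_
        have hST : S ⊆ T := (mem_filter.1 hT).2
        rcases eq_or_ne T.card n with hTn | hTn
        · rw [sum_const, card_sdiff_of_subset hST, nsmul_eq_mul,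
            Nat.cast_sub (card_le_card hST), hTn]
        · simp [hg T hTn]
    _ = (n - S.card : ℝ) * ∑ T with S ⊆ T, g T := (mul_sum ..).symm

theorem piLev_of_card {S : Finset E} {k : ℕ} (hS : S.card = k) (g : Finset E → ℝ) (n : ℕ) :
    piLev g n k S = (n.choose k : ℝ)⁻¹ * ∑ T with S ⊆ T, g T := if_pos hS

theorem piLev_of_card_ne {S : Finset E} {k : ℕ} (hS : S.card ≠ k) (g : Finset E → ℝ) (n : ℕ) :
    piLev g n k S = 0 := if_neg hS

theorem card_eq_of_piLev_ne_zero {g : Finset E → ℝ} {n k : ℕ} {S : Finset E}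
    (h : piLev g n k S ≠ 0) : S.card = k :=
  not_imp_comm.1 (fun hS => piLev_of_card_ne hS g n) h

theorem piLev_insert_of_mem {S : Finset E} {a : E} (ha : a ∈ S) (g : Finset E → ℝ) (n : ℕ) :
    piLev g n (S.card + 1) (insert a S) = 0 :=
  piLev_of_card_ne (by simp [ha]) g n

theorem piLev_nonneg {μ : Finset E → ℝ} (hμ : ∀ S, 0 ≤ μ S) (n k : ℕ) (S : Finset E) :
    0 ≤ piLev μ n k S := by
  unfold piLev
  split_ifs
  · exact mul_nonneg (by positivity) (sum_nonneg fun T _ => hμ T)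
  · rfl

theorem piLev_self {g : Finset E → ℝ} {n : ℕ} (hg : ∀ T, T.card ≠ n → g T = 0) :
    piLev g n n = g := by
  funext S
  rcases eq_or_ne S.card n with hS | hS
  · rw [piLev_of_card hS, sum_eq_single_of_mem S (by simp)]
    · simp
    · intro T hT hne
      refine hg T fun hTn => hne ?_
      exact (eq_of_subset_of_card_le (mem_filter.1 hT).2 (by lia)).symm
  · rw [piLev_of_card_ne hS, hg S hS]

theorem sum_piLev {g : Finset E → ℝ} {n k : ℕ} (hg : ∀ T, T.card ≠ n → g T = 0) (hk : k ≤ n) :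
    ∑ S, piLev g n k S = ∑ T, g T := by
  have hchoose : (n.choose k : ℝ) ≠ 0 := by exact_mod_cast (Nat.choose_pos hk).ne'
  calc ∑ S, piLev g n k S = ∑ S with S.card = k, (n.choose k : ℝ)⁻¹ * ∑ T with S ⊆ T, g T :=
        (sum_filter ..).symm
    _ = (n.choose k : ℝ)⁻¹ * ∑ T, ∑ _S ∈ powersetCard k T, g T := by
        rw [← mul_sum,
          sum_comm' (t' := univ) (s' := fun T => powersetCard k T) (by simp [and_comm])]
    _ = (n.choose k : ℝ)⁻¹ * ∑ T, n.choose k * g T := by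
        refine congrArg _ (sum_congr rfl fun T _ => ?_)
        rcases eq_or_ne T.card n with hTn | hTn
        · rw [sum_const, card_powersetCard, hTn, nsmul_eq_mul]
        · simp [hg T hTn]
    _ = ∑ T, g T := by rw [← mul_sum, inv_mul_cancel_left₀ hchoose]

theorem eq_zero_of_piLev_eq_zero {μ : Finset E → ℝ} {n k : ℕ} {S T : Finset E}
    (hμ : ∀ S, 0 ≤ μ S) (hk : k ≤ n) (hS : S.card = k) (h0 : piLev μ n k S = 0) (hST : S ⊆ T) :
    μ T = 0 := by
  have hchoose : (n.choose k : ℝ)⁻¹ ≠ 0 :=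
    inv_ne_zero (by exact_mod_cast (Nat.choose_pos hk).ne')
  rw [piLev_of_card hS, mul_eq_zero_iff_left hchoose,
    sum_eq_zero_iff_of_nonneg fun T _ => hμ T] at h0
  exact h0 T (by simpa using hST)

theorem piLev_eq_zero_of_subset {μ : Finset E → ℝ} {n j k : ℕ} {S T : Finset E}
    (hμ : ∀ S, 0 ≤ μ S) (hj : j ≤ n) (hS : S.card = j) (h0 : piLev μ n j S = 0) (hST : S ⊆ T) :
    piLev μ n k T = 0 := by
  have hsum : ∑ R with T ⊆ R, μ R = 0 := sum_eq_zero fun R hR =>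
    eq_zero_of_piLev_eq_zero hμ hj hS h0 (hST.trans (mem_filter.1 hR).2)
  simp [piLev, hsum]

theorem sum_piLev_insert {g : Finset E → ℝ} {n : ℕ} (hg : ∀ T, T.card ≠ n → g T = 0)
    {S : Finset E} (hS : S.card < n) :
    ∑ a, piLev g n (S.card + 1) (insert a S) = (S.card + 1) * piLev g n S.card S := by
  have hchoose : (n.choose (S.card + 1) : ℝ) * (S.card + 1) = n.choose S.card * (n - S.card) := by
    rw [← Nat.cast_sub hS.le]
    exact_mod_cast Nat.choose_succ_right_eq n S.card
  have h0 : (n.choose S.card : ℝ) ≠ 0 := by exact_mod_cast (Nat.choose_pos hS.le).ne'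
  have h1 : (n.choose (S.card + 1) : ℝ) ≠ 0 := by exact_mod_cast (Nat.choose_pos hS).ne'
  calc ∑ a, piLev g n (S.card + 1) (insert a S)
      = ∑ a ∈ Sᶜ, piLev g n (S.card + 1) (insert a S) :=
        (sum_subset (subset_univ _) fun a _ ha => piLev_insert_of_mem (by simpa using ha) g n).symm
    _ = (n.choose (S.card + 1) : ℝ)⁻¹ * ∑ a ∈ Sᶜ, ∑ T with insert a S ⊆ T, g T := by
        rw [mul_sum]
        exact sum_congr rfl fun a ha =>
          piLev_of_card (card_insert_of_notMem (by simpa using ha)) g n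
    _ = (S.card + 1) * piLev g n S.card S := by
        rw [sum_compl_sum_insert_subset hg, piLev_of_card rfl]
        field_simp
        linear_combination (-∑ T with S ⊆ T, g T) * hchoose

theorem piLoc_of_mem {S : Finset E} {a : E} (ha : a ∈ S) (μ : Finset E → ℝ) (n : ℕ) :
    piLoc μ n S a = 0 := by
  rw [piLoc, piLev_insert_of_mem ha, zero_div]

theorem sum_piLoc {μ : Finset E → ℝ} {n : ℕ} (hμn : ∀ T, T.card ≠ n → μ T = 0) {S : Finset E}
    (hS : S.card < n) (h0 : piLev μ n S.card S ≠ 0) : ∑ a, piLoc μ n S a = 1 := by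
  simp_rw [piLoc, ← sum_div]
  rw [sum_piLev_insert hμn hS, div_self (by positivity)]

theorem piLev_mul_piLoc {μ : Finset E → ℝ} {n : ℕ} (hμ : ∀ S, 0 ≤ μ S) {S : Finset E}
    (hS : S.card ≤ n) (a : E) :
    piLev μ n S.card S * piLoc μ n S a =
      (S.card + 1 : ℝ)⁻¹ * piLev μ n (S.card + 1) (insert a S) := by
  rcases eq_or_ne (piLev μ n S.card S) 0 with h0 | h0
  · simp [h0, piLev_eq_zero_of_subset hμ hS rfl h0 (subset_insert a S)]
  · rw [piLoc]
    field_simp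

theorem sum_piLev_mul_sum_piLoc {μ : Finset E → ℝ} {n k : ℕ} (hμ : ∀ S, 0 ≤ μ S) (hk : k ≤ n)
    (G : Finset E → ℝ) :
    ∑ S, piLev μ n k S * ∑ a, piLoc μ n S a * G (insert a S) =
      ∑ T, piLev μ n (k + 1) T * G T := by
  have on_level (j : ℕ) (F : Finset E → ℝ) :
      ∑ S, piLev μ n j S * F S = ∑ S ∈ powersetCard j univ, piLev μ n j S * F S :=
    (sum_subset (subset_univ _) fun S _ hS => by
      rw [piLev_of_card_ne (by simpa using hS), zero_mul]).symm
  calc ∑ S, piLev μ n k S * ∑ a, piLoc μ n S a * G (insert a S)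
      = ∑ S ∈ powersetCard k univ, ∑ a ∈ univ \ S,
          (k + 1 : ℝ)⁻¹ * (piLev μ n (k + 1) (insert a S) * G (insert a S)) := by
        rw [on_level]
        refine sum_congr rfl fun S hS => ?_
        obtain ⟨-, rfl⟩ := mem_powersetCard.1 hS
        rw [mul_sum, ← sum_subset (sdiff_subset (s := univ) (t := S))]
        · exact sum_congr rfl fun a _ => by rw [← mul_assoc, piLev_mul_piLoc hμ hk, mul_assoc]
        · intro a _ ha
          simp [piLoc_of_mem (show a ∈ S by simpa using ha)]
    _ = ∑ T, piLev μ n (k + 1) T * G T := by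
        rw [sum_powersetCard_sum_sdiff_insert univ k fun T =>
          (k + 1 : ℝ)⁻¹ * (piLev μ n (k + 1) T * G T), ← mul_sum, on_level, nsmul_eq_mul]
        push_cast
        rw [mul_inv_cancel_left₀ (by positivity)]

theorem localQ_of_notMem {S : Finset E} {a : E} (ha : a ∉ S) (μ : Finset E → ℝ) (n : ℕ) :
    localQ μ n S a = piLoc μ n (insert a S) := by
  funext b
  simp only [localQ, Matrix.of_apply, piLoc, card_insert_of_notMem ha]
  push_cast
  ring_nf

theorem piLoc_mul_localQ {μ : Finset E → ℝ} {n : ℕ} (hμ : ∀ S, 0 ≤ μ S) {S : Finset E}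
    (hS : S.card < n) (a b : E) :
    piLoc μ n S a * localQ μ n S a b = piLev μ n (S.card + 2) (insert b (insert a S)) /
      ((S.card + 1) * (S.card + 2) * piLev μ n S.card S) := by
  by_cases ha : a ∈ S
  · rw [piLoc_of_mem ha, zero_mul, piLev_of_card_ne, zero_div]
    have := card_insert_le b S
    grind
  have hcard : (insert a S).card = S.card + 1 := card_insert_of_notMem ha
  rw [piLoc, localQ, Matrix.of_apply]
  rcases eq_or_ne (piLev μ n (S.card + 1) (insert a S)) 0 with h0 | h0
  · simp [h0, piLev_eq_zero_of_subset hμ hS hcard h0 (subset_insert b _)]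
  · field_simp

/-- The conditional expectation of `f` under `μ`, given that the random face contains `S`
(and `0` if this has probability `0`). -/
noncomputable def faceMean (μ f : Finset E → ℝ) (S : Finset E) : ℝ :=
  (∑ T with S ⊆ T, μ T * f T) / ∑ T with S ⊆ T, μ T

theorem piLev_mul_faceMean {μ : Finset E → ℝ} (hμ : ∀ S, 0 ≤ μ S) (f : Finset E → ℝ) (n k : ℕ)
    (S : Finset E) :
    piLev μ n k S * faceMean μ f S = piLev (fun T => μ T * f T) n k S := by
  rcases ne_or_eq S.card k with hS | hS
  · simp [piLev_of_card_ne hS]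
  rw [piLev_of_card hS, piLev_of_card hS, mul_assoc, faceMean, mul_div_cancel_of_imp']
  intro h0
  rw [sum_eq_zero_iff_of_nonneg fun T _ => hμ T] at h0
  exact sum_eq_zero fun T hT => by rw [h0 T hT, zero_mul]

theorem sum_piLoc_mul_faceMean {μ : Finset E → ℝ} {n : ℕ} (hμ : ∀ S, 0 ≤ μ S)
    (hμn : ∀ T, T.card ≠ n → μ T = 0) (f : Finset E → ℝ) {S : Finset E} (hS : S.card < n)
    (h0 : piLev μ n S.card S ≠ 0) :
    ∑ a, piLoc μ n S a * faceMean μ f (insert a S) = faceMean μ f S := by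
  have hμfn : ∀ T, T.card ≠ n → μ T * f T = 0 := fun T hT => by rw [hμn T hT, zero_mul]
  simp_rw [piLoc, div_mul_eq_mul_div, piLev_mul_faceMean hμ, ← sum_div]
  rw [sum_piLev_insert hμfn hS, ← piLev_mul_faceMean hμ]
  field_simp

theorem sum_PupM_mul {μ : Finset E → ℝ} {n l : ℕ} (hμn : ∀ T, T.card ≠ n → μ T = 0)
    (hl : l ≤ n) (f : Finset E → ℝ) {R : Finset E} (hR : R.card = l) :
    ∑ T, PupM μ n l n R T * f T = faceMean μ f R := by
  have hchoose : (n.choose l : ℝ) ≠ 0 := by exact_mod_cast (Nat.choose_pos hl).ne'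
  rw [faceMean, sum_div, sum_filter]
  refine sum_congr rfl fun T _ => ?_
  rw [PupM, Matrix.of_apply, piLev_self hμn, piLev_of_card hR, mul_inv_cancel_left₀ hchoose]
  rcases eq_or_ne T.card n with hT | hT
  · simp [hT, hR, ite_mul, div_mul_eq_mul_div]
  · simp [hμn T hT]

theorem faceMean_one {μ : Finset E → ℝ} {n k : ℕ} {S : Finset E} (h0 : piLev μ n k S ≠ 0) :
    faceMean μ 1 S = 1 := by
  have hsum : ∑ T with S ⊆ T, μ T ≠ 0 := fun h => h0 (by simp [piLev, h])
  simp [faceMean, hsum]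

theorem piLev_mul_PdownM {μ : Finset E → ℝ} {n j k : ℕ} (hμ : ∀ S, 0 ≤ μ S) (hj : j ≤ n)
    (S R : Finset E) :
    piLev μ n k S * PdownM k j S R = piLev μ n j R * PupM μ n j k R S := by
  simp only [PdownM, PupM, Matrix.of_apply]
  by_cases h : R ⊆ S ∧ S.card = k ∧ R.card = j
  · obtain ⟨hRS, hS, hR⟩ := h
    rw [if_pos ⟨hRS, hS, hR⟩, if_pos ⟨hRS, hR, hS⟩]
    rcases eq_or_ne (piLev μ n j R) 0 with h0 | h0
    · rw [h0, piLev_eq_zero_of_subset hμ hj hR h0 hRS]; ring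
    · field_simp
  · grind

/-- The second moment of `faceMean μ f` under the level distribution `π_k`. -/
noncomputable def levelSecondMoment (μ : Finset E → ℝ) (n : ℕ) (f : Finset E → ℝ) (k : ℕ) : ℝ :=
  ∑ S, piLev μ n k S * faceMean μ f S ^ 2

/-- The `π_k`-average over the faces `S` of the variance of `a ↦ faceMean μ f (S ∪ {a})` under the
local distribution `π_{S,1}`. -/
noncomputable def localVariance (μ : Finset E → ℝ) (n : ℕ) (f : Finset E → ℝ) (k : ℕ) : ℝ :=
  ∑ S, piLev μ n k S * varw (piLoc μ n S) fun a => faceMean μ f (insert a S)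

theorem levelSecondMoment_zero {μ : Finset E → ℝ} (hμ1 : ∑ S, μ S = 1) (n : ℕ)
    (f : Finset E → ℝ) : levelSecondMoment μ n f 0 = (∑ S, μ S * f S) ^ 2 := by
  rw [levelSecondMoment, sum_eq_single_of_mem ∅ (mem_univ _)]
  · simp [piLev, faceMean, hμ1]
  · intro S _ hS
    rw [piLev_of_card_ne (by simpa using hS), zero_mul]

theorem levelSecondMoment_self {μ : Finset E → ℝ} {n : ℕ} (hμ : ∀ S, 0 ≤ μ S)
    (hμn : ∀ T, T.card ≠ n → μ T = 0) (f : Finset E → ℝ) :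
    levelSecondMoment μ n f n = ∑ S, μ S * f S ^ 2 := by
  have hμfn : ∀ T, T.card ≠ n → μ T * f T = 0 := fun T hT => by rw [hμn T hT, zero_mul]
  refine sum_congr rfl fun S _ => ?_
  have hmean := piLev_mul_faceMean hμ f n n S
  rw [piLev_self hμn, piLev_self hμfn] at hmean
  rw [piLev_self hμn]
  rcases eq_or_ne (μ S) 0 with h0 | h0
  · simp [h0]
  · rw [mul_left_cancel₀ h0 hmean]

theorem varw_piLev_self {μ : Finset E → ℝ} {n : ℕ} (hμ : IsDistOn μ n) (f : Finset E → ℝ) :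
    varw (piLev μ n n) f = levelSecondMoment μ n f n - levelSecondMoment μ n f 0 := by
  obtain ⟨hμ0, hμn, hμ1⟩ := hμ
  rw [piLev_self hμn, varw_eq_sum_sq_sub hμ1, levelSecondMoment_self hμ0 hμn,
    levelSecondMoment_zero hμ1]

theorem dirichletForm_PdownM_mul_PupM {μ : Finset E → ℝ} {n l : ℕ} (hμ : ∀ S, 0 ≤ μ S)
    (hμn : ∀ T, T.card ≠ n → μ T = 0) (hl : l ≤ n) (f : Finset E → ℝ) :
    dirichletForm (piLev μ n n) (PdownM n l * PupM μ n l n) f =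
      levelSecondMoment μ n f n - levelSecondMoment μ n f l := by
  have mul_PupM (R : Finset E) (g : Finset E → ℝ) (m : ℕ) :
      piLev μ n l R * (∑ T, PupM μ n l n R T * g T) ^ m =
        piLev μ n l R * faceMean μ g R ^ m := by
    rcases eq_or_ne (piLev μ n l R) 0 with h0 | h0
    · simp [h0]
    · rw [sum_PupM_mul hμn hl g (card_eq_of_piLev_ne_zero h0)]
  have hrow (R : Finset E) (hR : piLev μ n l R ≠ 0) : ∑ T, PupM μ n l n R T = 1 := by
    simpa [faceMean_one hR] using sum_PupM_mul hμn hl 1 (card_eq_of_piLev_ne_zero hR)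
  have hsq : ∑ R, piLev μ n l R * ∑ T, PupM μ n l n R T * f T ^ 2 =
      levelSecondMoment μ n f n := by
    have hμfn : ∀ T, T.card ≠ n → μ T * f T ^ 2 = 0 := fun T hT => by rw [hμn T hT, zero_mul]
    rw [levelSecondMoment_self hμ hμn, ← sum_piLev hμfn hl]
    refine sum_congr rfl fun R _ => ?_
    rw [← piLev_mul_faceMean hμ (fun T => f T ^ 2)]
    simpa using mul_PupM R (fun T => f T ^ 2) 1
  rw [dirichletForm_mul_of_adjoint (piLev_mul_PdownM hμ hl) hrow, sum_mul_varw hrow fun _ => f, hsq]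
  simp_rw [mul_PupM, levelSecondMoment]

theorem localVariance_eq_sub {μ : Finset E → ℝ} {n k : ℕ} (hμ : ∀ S, 0 ≤ μ S)
    (hμn : ∀ T, T.card ≠ n → μ T = 0) (hk : k < n) (f : Finset E → ℝ) :
    localVariance μ n f k = levelSecondMoment μ n f (k + 1) - levelSecondMoment μ n f k := by
  have hrow (S : Finset E) (hS : piLev μ n k S ≠ 0) : ∑ a, piLoc μ n S a = 1 := by
    obtain rfl := card_eq_of_piLev_ne_zero hS
    exact sum_piLoc hμn hk hS
  have hmean (S : Finset E) :
      piLev μ n k S * (∑ a, piLoc μ n S a * faceMean μ f (insert a S)) ^ 2 =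
        piLev μ n k S * faceMean μ f S ^ 2 := by
    rcases eq_or_ne (piLev μ n k S) 0 with h0 | h0
    · simp [h0]
    · obtain rfl := card_eq_of_piLev_ne_zero h0
      rw [sum_piLoc_mul_faceMean hμ hμn f hk h0]
  rw [localVariance, sum_mul_varw hrow,
    sum_piLev_mul_sum_piLoc hμ hk.le fun T => faceMean μ f T ^ 2]
  simp_rw [hmean, levelSecondMoment]

theorem sum_Ico_localVariance {μ : Finset E → ℝ} {n l : ℕ} (hμ : ∀ S, 0 ≤ μ S)
    (hμn : ∀ T, T.card ≠ n → μ T = 0) (hl : l ≤ n) (f : Finset E → ℝ) :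
    ∑ k ∈ Ico l n, localVariance μ n f k =
      levelSecondMoment μ n f n - levelSecondMoment μ n f l := by
  rw [← sum_Ico_sub _ hl]
  exact sum_congr rfl fun k hk => localVariance_eq_sub hμ hμn (mem_Ico.1 hk).2 f

theorem two_mul_sub_one_mul_varw_piLoc_le {μ : Finset E → ℝ} {n : ℕ} {c : ℝ} (hμ : ∀ S, 0 ≤ μ S)
    (hμn : ∀ T, T.card ≠ n → μ T = 0) (f : Finset E → ℝ) {S : Finset E} (hS : S.card + 1 < n)
    (hc : c * varw (piLoc μ n S) (fun a => faceMean μ f (insert a S)) ≤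
      dirichletForm (piLoc μ n S) (localQ μ n S) fun a => faceMean μ f (insert a S)) :
    (2 * c - 1) * varw (piLoc μ n S) (fun a => faceMean μ f (insert a S)) ≤
      ∑ a, piLoc μ n S a *
        varw (piLoc μ n (insert a S)) fun b => faceMean μ f (insert b (insert a S)) := by
  have hnotMem {a : E} (ha : piLoc μ n S a ≠ 0) : a ∉ S := mt (piLoc_of_mem · μ n) ha
  have hpos {a : E} (ha : piLoc μ n S a ≠ 0) :
      (insert a S).card < n ∧ piLev μ n (insert a S).card (insert a S) ≠ 0 := by
    rw [card_insert_of_notMem (hnotMem ha)]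
    exact ⟨hS, fun h0 => ha (by rw [piLoc, h0, zero_div])⟩
  have hlocalQ : ∑ a, piLoc μ n S a *
        varw (piLoc μ n (insert a S)) (fun b => faceMean μ f (insert b (insert a S))) =
      ∑ a, piLoc μ n S a * varw (localQ μ n S a) fun b => faceMean μ f (insert b (insert a S)) := by
    refine sum_congr rfl fun a _ => ?_
    rcases eq_or_ne (piLoc μ n S a) 0 with h0 | h0
    · simp [h0]
    · rw [localQ_of_notMem (hnotMem h0)]
  rw [hlocalQ]
  refine two_mul_sub_one_mul_varw_le (fun a b => ?_) (fun a b => ?_) (fun a ha => ?_)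
    (fun a b => by rw [insert_comm]) (fun a ha => ?_) hc
  · rw [piLoc_mul_localQ hμ (by lia)]
    have := piLev_nonneg hμ n
    exact div_nonneg (this _ _) (mul_nonneg (by positivity) (this _ _))
  · rw [piLoc_mul_localQ hμ (by lia), piLoc_mul_localQ hμ (by lia), insert_comm]
  · rw [localQ_of_notMem (hnotMem ha)]
    exact sum_piLoc hμn (hpos ha).1 (hpos ha).2
  · rw [localQ_of_notMem (hnotMem ha)]
    exact sum_piLoc_mul_faceMean hμ hμn f (hpos ha).1 (hpos ha).2

theorem two_mul_sub_one_mul_localVariance_le {μ : Finset E → ℝ} {n k : ℕ} {c : ℝ}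
    (hμ : ∀ S, 0 ≤ μ S) (hμn : ∀ T, T.card ≠ n → μ T = 0) (hk : k + 1 < n)
    (hc : ∀ S : Finset E, S.card = k → 0 < piLev μ n k S → ∀ x : E → ℝ,
      c * varw (piLoc μ n S) x ≤ dirichletForm (piLoc μ n S) (localQ μ n S) x)
    (f : Finset E → ℝ) :
    (2 * c - 1) * localVariance μ n f k ≤ localVariance μ n f (k + 1) := by
  rw [localVariance, localVariance, ← sum_piLev_mul_sum_piLoc hμ (by lia) fun T =>
    varw (piLoc μ n T) fun b => faceMean μ f (insert b T), mul_sum]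
  refine sum_le_sum fun S _ => ?_
  rcases (piLev_nonneg hμ n k S).eq_or_lt with h0 | hpos
  · simp [← h0]
  · have hS : S.card = k := card_eq_of_piLev_ne_zero hpos.ne'
    rw [mul_left_comm]
    exact mul_le_mul_of_nonneg_left
      (two_mul_sub_one_mul_varw_piLoc_le hμ hμn f (by lia) (hc S hS hpos _)) hpos.le

/-- Improved Random Walk Theorem: for `0 ≤ ℓ < n`, the spectral gap
of the multi-level down-up walk from level `n` to `ℓ` satisfies
`γ(P_{n,ℓ}^∇) ≥ (Σ_{i=ℓ}^{n-1} Γ_i)/(Σ_{i=0}^{n-1} Γ_i)` with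
`Γ_i = ∏_{j=0}^{i-1}(2γ_j − 1)` (so `Γ_0 = 1`), stated as a Poincaré inequality. -/
theorem improved_random_walk_theorem (μ : Finset E → ℝ) (n l : ℕ) (hl : l < n)
    (hμ : IsDistOn μ n) (γ : ℕ → ℝ)
    (hγ : ∀ j, 0 ≤ 2 * γ j - 1)
    (hloc : ∀ j, j ≤ n - 2 → ∀ S : Finset E, S.card = j → 0 < piLev μ n j S →
      ∀ f : E → ℝ, γ j * varw (piLoc μ n S) f ≤
        dirichletForm (piLoc μ n S) (localQ μ n S) f)
    (f : Finset E → ℝ) :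
    ((∑ i ∈ Finset.Ico l n, ∏ j ∈ range i, (2 * γ j - 1)) /
        (∑ i ∈ range n, ∏ j ∈ range i, (2 * γ j - 1))) * varw (piLev μ n n) f ≤
      dirichletForm (piLev μ n n) (PdownM n l * PupM μ n l n) f := by
  have htop := sum_Ico_localVariance hμ.1 hμ.2.1 hl.le f
  have hall := sum_Ico_localVariance hμ.1 hμ.2.1 n.zero_le f
  have hΓ : ∀ i, 0 ≤ ∏ j ∈ range i, (2 * γ j - 1) := fun i => prod_nonneg fun j _ => hγ j
  rw [dirichletForm_PdownM_mul_PupM hμ.1 hμ.2.1 hl.le, varw_piLev_self hμ, ← htop, ← hall,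
    ← range_eq_Ico]
  refine sum_Ico_div_sum_range_mul_le hl.le ?_ fun i j hij hj => ?_
  · exact sum_pos' (fun i _ => hΓ i) ⟨0, mem_range.2 (by lia), by simp⟩
  · exact prod_range_mul_le_prod_range_mul hγ (fun k hk =>
      two_mul_sub_one_mul_localVariance_le hμ.1 hμ.2.1 hk (hloc k (by lia)) f) hij hj
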